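/- Let (A, t) be a C_k-algebra and let M ⊆ A be a proper cyclic deductive system. Then the following are equivalent: (1) M is maximal; (2) if a ∉ M, then there exists m ∈ M such that (⋀_{j=1}^{k} t^j(△a)) ∧ m = 0; (3) if (⋀_{j=1}^{k} t^j(△a)) ∨ b ∈ M, then a ∈ M or b ∈ M; (4) if a ∉ M, then ∼△(⋀_{j=1}^{k} t^j(a)) ∈ M; (5) if a ∉ M and b ∉ M, then a ⇁ b ∈ M and b ⇁ a ∈ M. -/

import Mathlib

universe u

/-- Modal pseudocomplemented De Morgan algebra (mpM-algebra). -/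
class MpM (A : Type u) extends DistribLattice A, BoundedOrder A where
  dm : A → A   -- De Morgan negation ∼
  ps : A → A   -- pseudocomplement *
  dm_dm : ∀ x : A, dm (dm x) = x
  dm_sup : ∀ x y : A, dm (x ⊔ y) = dm x ⊓ dm y
  pseudo : ∀ a x : A, a ⊓ x = ⊥ ↔ x ≤ ps a
  modal : ∀ x : A, x ⊔ dm x ≤ x ⊔ ps x

open MpM

variable {A : Type u} [MpM A]

/-- ∇x = ∼(∼x ∧ x*) -/
def nabla (x : A) : A := dm (dm x ⊓ ps x)

/-- △x = ∼∇∼x -/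
def tri (x : A) : A := dm (nabla (dm x))

/-- A C_k-algebra structure on an mpM-algebra `A`: an automorphism `t` with `t^k = id`. -/
structure CkStr (A : Type u) [MpM A] (k : ℕ) where
  t : A → A
  bij : Function.Bijective t
  map_inf : ∀ x y : A, t (x ⊓ y) = t x ⊓ t y
  map_sup : ∀ x y : A, t (x ⊔ y) = t x ⊔ t y
  map_dm : ∀ x : A, t (dm x) = dm (t x)
  map_ps : ∀ x : A, t (ps x) = ps (t x)
  map_bot : t (⊥ : A) = ⊥
  map_top : t (⊤ : A) = ⊤
  periodic : ∀ x : A, t^[k] x = x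

/-- Lattice filter: nonempty, upward closed, closed under binary meets. -/
def IsLatFilter (F : Set A) : Prop :=
  F.Nonempty ∧ (∀ x ∈ F, ∀ y : A, x ≤ y → y ∈ F) ∧ ∀ x ∈ F, ∀ y ∈ F, x ⊓ y ∈ F

/-- c-filter: a filter closed under △ and t. -/
def IsCFilter {k : ℕ} (T : CkStr A k) (F : Set A) : Prop :=
  IsLatFilter F ∧ ∀ x ∈ F, tri x ∈ F ∧ T.t x ∈ F

/-- maximal c-filter: proper and not properly contained in a proper c-filter. -/
def IsMaxCFilter {k : ℕ} (T : CkStr A k) (N : Set A) : Prop :=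
  IsCFilter T N ∧ N ≠ Set.univ ∧
    ∀ G : Set A, IsCFilter T G → G ≠ Set.univ → N ⊆ G → N = G

/-- prime filter -/
def IsPrimeFilter (P : Set A) : Prop :=
  IsLatFilter P ∧ P ≠ Set.univ ∧ ∀ x y : A, x ⊔ y ∈ P → x ∈ P ∨ y ∈ P

/-- ultrafilter: maximal proper (lattice) filter -/
def IsUltraFilter (U : Set A) : Prop :=
  IsLatFilter U ∧ U ≠ Set.univ ∧
    ∀ G : Set A, IsLatFilter G → G ≠ Set.univ → U ⊆ G → U = G

/-- Birula–Rasiowa transformation φ(P) = A \ {∼x : x ∈ P}. -/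
def brPhi (P : Set A) : Set A := Set.univ \ (dm '' P)

/-- a ⇁ b = (⋁_{i=1}^{k} ∇(∼ t^i(a))) ∨ b -/
def rimp {k : ℕ} (T : CkStr A k) (a b : A) : A :=
  ((Finset.Icc 1 k).sup fun i => nabla (dm (T.t^[i] a))) ⊔ b

/-- cyclic deductive system -/
def IsCDS {k : ℕ} (T : CkStr A k) (D : Set A) : Prop :=
  (⊤ : A) ∈ D ∧ ∀ x ∈ D, ∀ y : A, rimp T x y ∈ D → y ∈ D

/-- maximal cyclic deductive system -/
def IsMaxCDS {k : ℕ} (T : CkStr A k) (M : Set A) : Prop :=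
  IsCDS T M ∧ M ≠ Set.univ ∧
    ∀ G : Set A, IsCDS T G → G ≠ Set.univ → M ⊆ G → M = G

/-- the smallest cyclic deductive system containing `X` -/
def genCDS {k : ℕ} (T : CkStr A k) (X : Set A) : Set A :=
  ⋂₀ {D : Set A | IsCDS T D ∧ X ⊆ D}

/-- K(A) = {x : t(x) = x and ∇x = x} -/
def Kset {k : ℕ} (T : CkStr A k) : Set A := {x : A | T.t x = x ∧ nabla x = x}

/-- consistency operator ∘x = ⋀_{i=0}^{k} t^i((∼x ∨ x) ∧ (x ∧ ∼x)*) -/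
def cCirc {k : ℕ} (T : CkStr A k) (x : A) : A :=
  (Finset.Icc 0 k).inf fun i => T.t^[i] ((dm x ⊔ x) ⊓ ps (x ⊓ dm x))

/-- x → y = ∼((∼(x∨y))* ∧ (x∨y)) ∨ ((∼(x∧y))* ∧ (x∧y)) -/
def mpTo (x y : A) : A :=
  dm (ps (dm (x ⊔ y)) ⊓ (x ⊔ y)) ⊔ (ps (dm (x ⊓ y)) ⊓ (x ⊓ y))

/-- x ⇒ y = (x → y) ∧ (∼y → ∼x) -/
def mpIff (x y : A) : A := mpTo x y ⊓ mpTo (dm y) (dm x)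

theorem dm_antitone' {x y : A} (h : x ≤ y) : dm y ≤ dm x := by
  have := dm_sup x y
  rw [sup_eq_right.2 h] at this
  rw [this]; exact inf_le_left

theorem dm_inf' (x y : A) : dm (x ⊓ y) = dm x ⊔ dm y := by
  have := dm_sup (dm x) (dm y)
  rw [dm_dm, dm_dm] at this
  rw [← this, dm_dm]

theorem dm_bot' : dm (⊥ : A) = ⊤ := by
  apply top_unique
  have := dm_antitone' (bot_le : (⊥ : A) ≤ dm ⊤)
  rwa [dm_dm] at this

theorem dm_top' : dm (⊤ : A) = ⊥ := by
  rw [← dm_bot', dm_dm]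

theorem tri_eq' (x : A) : tri x = x ⊓ ps (dm x) := by
  simp only [tri, nabla, dm_dm]

theorem nabla_dm' (x : A) : nabla (dm x) = dm (tri x) := by
  simp only [tri, dm_dm]

theorem inf_ps' (x : A) : x ⊓ ps x = ⊥ := (pseudo _ _).2 le_rfl

theorem tri_inf_dm (x : A) : tri x ⊓ dm (tri x) = ⊥ := by
  have h := dm_antitone' (modal (dm x))
  rw [dm_sup, dm_sup, dm_dm] at h
  rw [tri_eq', dm_inf', inf_sup_left]
  apply bot_unique
  have hb := inf_ps' (dm x)
  apply sup_le
  · rw [← hb]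
    exact le_inf inf_le_right (inf_le_left.trans inf_le_right)
  · rw [← hb]
    refine le_inf (le_trans ?_ (h.trans inf_le_right)) (inf_le_left.trans inf_le_right)
    exact le_inf (inf_le_left.trans inf_le_left) inf_le_right

theorem tri_sup_dm (x : A) : tri x ⊔ dm (tri x) = ⊤ := by
  have := congrArg dm (tri_inf_dm x)
  rw [dm_inf', dm_dm, dm_bot', sup_comm] at this
  exact this

theorem tri_of_bool {x : A} (h : x ⊓ dm x = ⊥) : tri x = x := by
  rw [tri_eq', inf_eq_left, ← pseudo, inf_comm, h]

theorem tri_le' (x : A) : tri x ≤ x := by rw [tri_eq']; exact inf_le_left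

theorem ps_sup' (x y : A) : ps (x ⊔ y) = ps x ⊓ ps y := by
  apply eq_of_forall_le_iff
  intro c
  rw [le_inf_iff, ← pseudo, ← pseudo, ← pseudo, inf_sup_right, sup_eq_bot_iff]

theorem tri_inf' (x y : A) : tri (x ⊓ y) = tri x ⊓ tri y := by
  rw [tri_eq', tri_eq', tri_eq', dm_inf', ps_sup', inf_inf_inf_comm]

theorem tri_top' : tri (⊤ : A) = ⊤ := by
  apply tri_of_bool
  rw [dm_top', inf_bot_eq]

section
variable {k : ℕ} (T : CkStr A k)

theorem t_tri (x : A) : T.t (tri x) = tri (T.t x) := by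
  rw [tri_eq', tri_eq', T.map_inf, T.map_ps, T.map_dm]

theorem tn_tri (n : ℕ) (x : A) : T.t^[n] (tri x) = tri (T.t^[n] x) := by
  induction n generalizing x with
  | zero => rfl
  | succ n ih => rw [Function.iterate_succ_apply, t_tri, ih, Function.iterate_succ_apply]

theorem tn_inf (n : ℕ) (x y : A) : T.t^[n] (x ⊓ y) = T.t^[n] x ⊓ T.t^[n] y := by
  induction n generalizing x y with
  | zero => rfl
  | succ n ih => simp only [Function.iterate_succ_apply, T.map_inf, ih]

theorem finset_inf_map (f : A → A) (h1 : f ⊤ = ⊤) (h2 : ∀ x y, f (x ⊓ y) = f x ⊓ f y)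
    (s : Finset ℕ) (g : ℕ → A) : f (s.inf g) = s.inf fun i => f (g i) := by
  classical
  induction s using Finset.induction_on with
  | empty => simp [h1]
  | insert a s _ ih => rw [Finset.inf_insert, Finset.inf_insert, h2, ih]

theorem dm_finset_inf (s : Finset ℕ) (g : ℕ → A) :
    dm (s.inf g) = s.sup fun i => dm (g i) := by
  classical
  induction s using Finset.induction_on with
  | empty => simp [dm_top']
  | insert a s _ ih => rw [Finset.inf_insert, Finset.sup_insert, dm_inf', ih]

/-- The operator a ↦ ⋀ t^j (△ a). -/
def NN (a : A) : A := (Finset.Icc 1 k).inf fun j => T.t^[j] (tri a)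

theorem NN_eq (a : A) : tri ((Finset.Icc 1 k).inf fun j => T.t^[j] a) = NN T a := by
  rw [finset_inf_map tri tri_top' tri_inf']
  simp only [NN, tn_tri]

theorem rimp_eq (a b : A) : rimp T a b = dm (NN T a) ⊔ b := by
  simp only [rimp, NN, dm_finset_inf, nabla_dm', tn_tri]

theorem NN_inf_dm (a : A) : NN T a ⊓ dm (NN T a) = ⊥ := by
  rw [← NN_eq]; exact tri_inf_dm _

theorem NN_sup_dm (a : A) : NN T a ⊔ dm (NN T a) = ⊤ := by
  rw [← NN_eq]; exact tri_sup_dm _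

theorem NN_le (hk : 0 < k) (a : A) : NN T a ≤ a := by
  have h : NN T a ≤ T.t^[k] (tri a) :=
    Finset.inf_le (f := fun j => T.t^[j] (tri a)) (Finset.mem_Icc.2 ⟨hk, le_rfl⟩)
  rw [T.periodic] at h
  exact h.trans (tri_le' a)

theorem NN_inf (a b : A) : NN T (a ⊓ b) = NN T a ⊓ NN T b := by
  simp only [NN, tri_inf', tn_inf]
  exact Finset.inf_inf

theorem NN_mono {a b : A} (h : a ≤ b) : NN T a ≤ NN T b := by
  have := NN_inf T a b
  rw [inf_eq_left.2 h] at this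
  rw [this]; exact inf_le_right

theorem t_NN (hk : 0 < k) (a : A) : T.t (NN T a) = NN T a := by
  have hle : ∀ a, NN T a ≤ T.t (NN T a) := by
    intro a
    unfold NN
    rw [finset_inf_map T.t T.map_top T.map_inf]
    apply Finset.le_inf
    intro j hj
    rw [Finset.mem_Icc] at hj
    rw [← Function.iterate_succ_apply' T.t]
    rcases eq_or_lt_of_le hj.2 with h | h
    · subst h
      rw [Function.iterate_succ_apply', T.periodic]
      exact Finset.inf_le (f := fun j => T.t^[j] (tri a)) (Finset.mem_Icc.2 ⟨le_rfl, hk⟩)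
    · exact Finset.inf_le (f := fun j => T.t^[j] (tri a)) (Finset.mem_Icc.2 ⟨by omega, h⟩)
  have hm : Monotone T.t := fun x y h => by
    have := T.map_inf x y
    rw [inf_eq_left.2 h] at this
    rw [this]; exact inf_le_right
  have hn : ∀ n : ℕ, T.t (NN T a) ≤ T.t^[n + 1] (NN T a) := by
    intro n
    induction n with
    | zero => exact le_rfl
    | succ n ih =>
      rw [Function.iterate_succ_apply']
      exact (hm (hle a)).trans (hm ih)
  refine le_antisymm ?_ (hle a)
  have := hn (k - 1)
  rwa [Nat.sub_add_cancel hk, T.periodic] at this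

theorem NN_NN (hk : 0 < k) (a : A) : NN T (NN T a) = NN T a := by
  apply le_antisymm (NN_le T hk _)
  change NN T a ≤ (Finset.Icc 1 k).inf fun j => T.t^[j] (tri (NN T a))
  apply Finset.le_inf
  intro j _
  rw [tri_of_bool (NN_inf_dm T a), Function.iterate_fixed (t_NN T hk a)]

theorem cds_up {M : Set A} (hM : IsCDS T M) {x y : A} (hk : 0 < k) (hx : x ∈ M) (h : NN T x ≤ y) :
    y ∈ M := by
  apply hM.2 x hx
  rw [rimp_eq]
  have : dm (NN T x) ⊔ y = ⊤ := by
    apply top_unique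
    rw [← NN_sup_dm T x]
    exact sup_le (h.trans le_sup_right) le_sup_left
  rw [this]; exact hM.1

theorem cds_inf {M : Set A} (hM : IsCDS T M) {x y : A} (hk : 0 < k) (hx : x ∈ M) (hy : y ∈ M) :
    x ⊓ y ∈ M := by
  apply hM.2 x hx
  rw [rimp_eq]
  apply cds_up T hM hk hy
  calc NN T y = NN T y ⊓ (NN T x ⊔ dm (NN T x)) := by rw [NN_sup_dm, inf_top_eq]
    _ ≤ dm (NN T x) ⊔ x ⊓ y := by
      rw [inf_sup_left]
      refine sup_le ?_ (inf_le_right.trans le_sup_left)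
      exact le_trans (le_inf (inf_le_right.trans (NN_le T hk x))
        (inf_le_left.trans (NN_le T hk y))) le_sup_right

theorem cds_le {M : Set A} (hM : IsCDS T M) {x y : A} (hk : 0 < k) (hx : x ∈ M) (h : x ≤ y) :
    y ∈ M := cds_up T hM hk hx ((NN_le T hk x).trans h)

theorem cds_ext {M : Set A} (hM : IsCDS T M) (hk : 0 < k) (a : A) :
    IsCDS T {y | dm (NN T a) ⊔ y ∈ M} := by
  constructor
  · simpa using hM.1
  · intro x hx y hy
    simp only [Set.mem_ofPred_eq, rimp_eq] at hx hy ⊢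
    have h1 : NN T (dm (NN T a) ⊔ x) ∈ M := cds_up T hM hk hx le_rfl
    apply cds_le T hM hk (cds_inf T hM hk h1 hy)
    have h2 : NN T a ⊓ NN T (dm (NN T a) ⊔ x) ≤ NN T x := by
      rw [← NN_NN T hk a, ← NN_inf, NN_NN T hk a]
      apply NN_mono
      rw [inf_sup_left, NN_inf_dm, bot_sup_eq]
      exact inf_le_right
    set p := NN T (dm (NN T a) ⊔ x)
    have h3 : p ≤ dm (NN T a) ⊔ NN T x := by
      calc p = p ⊓ (NN T a ⊔ dm (NN T a)) := by rw [NN_sup_dm, inf_top_eq]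
        _ ≤ _ := by
          rw [inf_sup_left]
          refine sup_le ?_ (inf_le_right.trans le_sup_left)
          rw [inf_comm]
          exact h2.trans le_sup_right
    refine (inf_le_inf_right _ h3).trans ?_
    rw [← sup_inf_left, inf_sup_left, NN_inf_dm, bot_sup_eq]
    exact sup_le_sup_left inf_le_right _
end

theorem stmt12 {k : ℕ} (hk : 0 < k) (T : CkStr A k) (M : Set A)
    (hM : IsCDS T M) (hprop : M ≠ Set.univ) :
    List.TFAE
      [ ∀ G : Set A, IsCDS T G → G ≠ Set.univ → M ⊆ G → M = G,
        ∀ a : A, a ∉ M →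
          ∃ m ∈ M, ((Finset.Icc 1 k).inf fun j => T.t^[j] (tri a)) ⊓ m = ⊥,
        ∀ a b : A,
          ((Finset.Icc 1 k).inf fun j => T.t^[j] (tri a)) ⊔ b ∈ M → a ∈ M ∨ b ∈ M,
        ∀ a : A, a ∉ M → dm (tri ((Finset.Icc 1 k).inf fun j => T.t^[j] a)) ∈ M,
        ∀ a b : A, a ∉ M → b ∉ M → rimp T a b ∈ M ∧ rimp T b a ∈ M ] := by
  have e : ∀ a : A, ((Finset.Icc 1 k).inf fun j => T.t^[j] (tri a)) = NN T a := fun _ => rfl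
  simp only [NN_eq, e, rimp_eq]
  tfae_have 1 → 4 := by
    intro h a ha
    by_contra hc
    have hG := h _ (cds_ext T hM hk a) ?_ ?_
    · apply ha
      rw [hG]
      have : dm (NN T a) ⊔ a = ⊤ := by
        apply top_unique
        rw [← NN_sup_dm T a]
        exact sup_le ((NN_le T hk a).trans le_sup_right) le_sup_left
      simp only [Set.mem_ofPred_eq, this]
      exact hM.1
    · intro hu
      have : (⊥ : A) ∈ {y | dm (NN T a) ⊔ y ∈ M} := by rw [hu]; trivial
      simp only [Set.mem_ofPred_eq, sup_bot_eq] at this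
      exact hc this
    · intro x hx
      exact cds_le T hM hk hx le_sup_right
  tfae_have 4 → 2 := fun h a ha => ⟨_, h a ha, NN_inf_dm T a⟩
  tfae_have 2 → 3 := by
    intro h a b hab
    by_contra! hc
    obtain ⟨m, hm, hm0⟩ := h a hc.1
    apply hc.2
    apply cds_le T hM hk (cds_inf T hM hk hab hm)
    rw [inf_sup_right, hm0, bot_sup_eq]
    exact inf_le_left
  tfae_have 3 → 4 := by
    intro h a ha
    refine (h a _ ?_).resolve_left ha
    rw [NN_sup_dm]; exact hM.1
  tfae_have 4 → 5 := fun h a b ha hb =>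
    ⟨cds_le T hM hk (h a ha) le_sup_left, cds_le T hM hk (h b hb) le_sup_left⟩
  tfae_have 5 → 1 := by
    intro h G hG hGu hMG
    apply hMG.antisymm
    intro a ha
    by_contra haM
    apply hGu
    apply Set.eq_univ_of_forall
    intro b
    by_contra hb
    apply hb
    apply hG.2 a ha
    rw [rimp_eq]
    exact hMG (h a b haM fun hbM => hb (hMG hbM)).1
  tfae_finish
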